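/- Every finite-dimensional n-Lie module over the vector products n-Lie algebra V_n (n ≥ 2) over ℂ is completely reducible. -/

import Mathlib

section Helpers

open Module

attribute [local instance] LieRing.ofAssociativeRing

theorem sl2_int {V : Type*} [AddCommGroup V] [Module ℂ V] [FiniteDimensional ℂ V]
    {h e f : End ℂ V} (t : IsSl2Triple h e f) {μ : ℂ} (hμ : h.HasEigenvalue μ) :
    ∃ z : ℤ, μ = z := by
  obtain ⟨v, hv⟩ := hμ.exists_hasEigenvector
  have hhe : h * e - e * h = (2 : ℂ) • e := by
    have := t.lie_h_e_smul ℂ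
    rwa [Ring.lie_def] at this
  have key : ∀ n : ℕ, h ((e ^ n) v) = (μ + 2 * n) • (e ^ n) v := by
    intro n
    induction n with
    | zero => simpa using hv.apply_eq_smul
    | succ n ih =>
      have h1 := congrArg (fun T : End ℂ V => T ((e ^ n) v)) hhe
      simp only [LinearMap.sub_apply, Module.End.mul_apply, LinearMap.smul_apply, ih,
        map_smul] at h1
      rw [pow_succ', Module.End.mul_apply, sub_eq_iff_eq_add.mp h1, ← add_smul]
      push_cast
      congr 1
      ring
  have hz : ∃ n : ℕ, (e ^ n) v = 0 := by
    by_contra! hne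
    have hfin : (Set.range (fun n : ℕ => μ + 2 * (n : ℂ))).Finite := by
      refine h.finite_hasEigenvalue.subset ?_
      rintro _ ⟨n, rfl⟩
      exact Module.End.hasEigenvalue_of_hasEigenvector
        (Module.End.hasEigenvector_iff.mpr ⟨Module.End.mem_eigenspace_iff.mpr (key n), hne n⟩)
    refine Set.infinite_range_of_injective ?_ hfin
    intro a b hab
    simpa using hab
  obtain ⟨n, hn₁, hn₂⟩ := Nat.exists_not_and_succ_of_not_zero_of_exists
    (p := fun n => (e ^ n) v = 0) (by simpa using hv.2) hz
  have P : t.HasPrimitiveVectorWith ((e ^ n) v) (μ + 2 * n) :=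
    ⟨hn₁, key n, by simpa [pow_succ'] using hn₂⟩
  obtain ⟨k, hk⟩ := P.exists_nat
  exact ⟨(k : ℤ) - 2 * n, by push_cast; rw [← hk]; ring⟩

theorem lie_nilp_zero {V : Type*} [AddCommGroup V] [Module ℂ V] {h e : End ℂ V} (c : ℂ)
    (hc : c ≠ 0) (hn : IsNilpotent h) (he : ⁅h, e⁆ = c • e) : e = 0 := by
  obtain ⟨k, hk⟩ := LieAlgebra.ad_nilpotent_of_nilpotent (R := ℂ) hn
  have : ∀ n : ℕ, ((LieAlgebra.ad ℂ (End ℂ V) h) ^ n) e = c ^ n • e := by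
    intro n
    induction n with
    | zero => simp
    | succ n ih => rw [pow_succ', Module.End.mul_apply, ih, map_smul, LieAlgebra.ad_apply, he,
        smul_smul, pow_succ]
  have h2 := this k
  rw [hk] at h2
  simpa [hc] using h2.symm

theorem sq_trace {V : Type*} [AddCommGroup V] [Module ℂ V] [FiniteDimensional ℂ V]
    (h : End ℂ V) (hzint : ∀ μ, h.HasEigenvalue μ → ∃ z : ℤ, μ = z) :
    ∃ r : ℝ, 0 ≤ r ∧ LinearMap.trace ℂ V (h ^ 2) = r ∧ (r = 0 → IsNilpotent h) := by
  have hsp : (h ^ 2).charpoly.Splits := IsAlgClosed.splits _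
  have hr : ∀ x ∈ (h ^ 2).charpoly.roots, ∃ s : ℝ, 0 ≤ s ∧ x = s := by
    intro x hx
    have h1 := (Module.End.mem_spectrum_iff_isRoot_charpoly _ _).mpr
      (Polynomial.isRoot_of_mem_roots hx)
    rcases subsingleton_or_nontrivial V with hV | hV
    · exact absurd h1 (by simp [spectrum.of_subsingleton])
    rw [spectrum.map_pow_of_pos _ two_pos] at h1
    obtain ⟨y, hy, rfl⟩ := h1
    obtain ⟨z, rfl⟩ := hzint y (Module.End.hasEigenvalue_iff_mem_spectrum.mpr hy)
    exact ⟨(z : ℝ) ^ 2, sq_nonneg _, by push_cast; rfl⟩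
  have hex : ∃ m : Multiset ℝ, (∀ s ∈ m, 0 ≤ s) ∧ (h ^ 2).charpoly.roots = m.map (fun s : ℝ => (s : ℂ)) := by
    refine ⟨(h ^ 2).charpoly.roots.map Complex.re, ?_, ?_⟩
    · intro s hs
      obtain ⟨x, hx, rfl⟩ := Multiset.mem_map.mp hs
      obtain ⟨s, hs', rfl⟩ := hr x hx
      simpa using hs'
    · rw [Multiset.map_map]
      conv_lhs => rw [← Multiset.map_id (h ^ 2).charpoly.roots]
      refine Multiset.map_congr rfl ?_
      intro x hx
      obtain ⟨s, hs, rfl⟩ := hr x hx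
      simp
  obtain ⟨m, hm, hroots⟩ := hex
  refine ⟨m.sum, Multiset.sum_nonneg hm, ?_, ?_⟩
  · rw [Module.End.trace_eq_sum_roots_charpoly_of_splits hsp, hroots]
    exact (map_multiset_sum Complex.ofRealHom m).symm
  · intro h0
    have hall : ∀ s ∈ m, s = 0 := (Multiset.all_zero_of_le_zero_le_of_sum_eq_zero hm h0)
    have : IsNilpotent (h ^ 2) := by
      rw [LinearMap.isNilpotent_iff_charpoly]
      have := hsp.eq_prod_roots_of_monic (LinearMap.charpoly_monic _)
      have hrep : (h ^ 2).charpoly.roots = Multiset.replicate (finrank ℂ V) 0 := by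
        rw [Multiset.eq_replicate]
        refine ⟨?_, ?_⟩
        · rw [← hsp.natDegree_eq_card_roots, LinearMap.charpoly_natDegree]
        · intro b hb
          rw [hroots] at hb
          obtain ⟨s, hs, rfl⟩ := Multiset.mem_map.mp hb
          simp [hall s hs]
      rw [this, hrep]
      simp
    exact IsNilpotent.of_pow this

/-- so3 triple trace lemma. -/
theorem so3_trace {V : Type*} [AddCommGroup V] [Module ℂ V] [FiniteDimensional ℂ V]
    (A B C : End ℂ V) (ε : ℂ) (hε : ε ^ 2 = 1) (hAB : ⁅A, B⁆ = ε • C) (hAC : ⁅A, C⁆ = -(ε • B))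
    (hBC : ⁅B, C⁆ = ε • A) :
    ∃ r : ℝ, 0 ≤ r ∧ LinearMap.trace ℂ V (A * A) = -(r : ℂ) ∧ (r = 0 → A = 0) := by
  have hε0 : ε ≠ 0 := by rintro rfl; simp at hε
  by_cases hA : A = 0
  · exact ⟨0, le_rfl, by simp [hA], fun _ => hA⟩
  have hCA : ⁅C, A⁆ = ε • B := by rw [← lie_skew, hAC, neg_neg]
  have hCB : ⁅C, B⁆ = -(ε • A) := by rw [← lie_skew, hBC]
  have I2 : Complex.I * Complex.I = -1 := Complex.I_mul_I
  have t : IsSl2Triple ((2 * Complex.I * ε) • A) (B + Complex.I • C) (-(B - Complex.I • C)) := by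
    refine ⟨?_, ?_, ?_, ?_⟩
    · simp [hA, hε0]
    · simp only [lie_neg, add_lie, lie_sub, smul_lie, lie_smul, lie_self, hBC, hCB]
      module
    · simp only [lie_add, smul_lie, lie_smul, hAB, hAC, smul_neg, smul_smul, smul_add]
      have e1 : 2 * Complex.I * ε * ε = 2 * Complex.I := by linear_combination 2 * Complex.I * hε
      have e2 : Complex.I * (2 * Complex.I) = -2 := by
        linear_combination 2 * I2
      rw [e1, e2]
      module
    · simp only [lie_sub, lie_neg, smul_lie, lie_smul, hAB, hAC, smul_neg, smul_smul, smul_sub]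
      have e1 : 2 * Complex.I * ε * ε = 2 * Complex.I := by linear_combination 2 * Complex.I * hε
      have e2 : Complex.I * (2 * Complex.I) = -2 := by
        linear_combination 2 * I2
      rw [e1, e2]
      module
  obtain ⟨r, hr0, hr, hrn⟩ := sq_trace _ (fun μ hμ => sl2_int t hμ)
  refine ⟨r / 4, by positivity, ?_, ?_⟩
  · rw [smul_pow, map_smul, pow_two A, smul_eq_mul] at hr
    have e3 : (2 * Complex.I * ε) ^ 2 = -4 := by
      linear_combination (-4) * hε + 4 * ε ^ 2 * I2
    rw [e3] at hr
    push_cast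
    rw [← hr]
    ring
  · intro h0
    have hn := hrn (by linarith)
    exact absurd (lie_nilp_zero 2 two_ne_zero hn (t.lie_h_e_smul ℂ)) t.e_ne_zero

/-- A finite family spanning a Lie algebra of `so` type. -/
structure IsSoFam {ι L : Type*} [Fintype ι] [LieRing L] [LieAlgebra ℂ L] (x : ι → L) : Prop where
  cas : ∃ γ : ι → ι → ι → ℂ, (∀ a b c, γ a b c = -γ a c b) ∧
    ∀ a b, ⁅x a, x b⁆ = ∑ c, γ a b c • x c
  tri : ∀ a, x a = 0 ∨ ∃ (b c : ι) (ε : ℂ), ε ^ 2 = 1 ∧ ⁅x a, x b⁆ = ε • x c ∧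
    ⁅x a, x c⁆ = -(ε • x b) ∧ ⁅x b, x c⁆ = ε • x a

theorem cas_comm {ι L A : Type*} [Fintype ι] [LieRing L] [LieAlgebra ℂ L] {x : ι → L}
    (hx : IsSoFam x) [Ring A] [Algebra ℂ A] (φ : L →ₗ⁅ℂ⁆ A) (a : ι) :
    Commute (φ (x a)) (∑ b, φ (x b) * φ (x b)) := by
  obtain ⟨γ, hγ, hb⟩ := hx.cas
  have h1 : ∀ b, φ (x a) * φ (x b) - φ (x b) * φ (x a) = ∑ c, γ a b c • φ (x c) := by
    intro b
    have := congrArg φ (hb a b)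
    rw [LieHom.map_lie, Ring.lie_def] at this
    rw [this]
    simp
  have h2 : φ (x a) * (∑ b, φ (x b) * φ (x b)) - (∑ b, φ (x b) * φ (x b)) * φ (x a)
      = ∑ b, ∑ c, γ a b c • (φ (x c) * φ (x b) + φ (x b) * φ (x c)) := by
    rw [Finset.mul_sum, Finset.sum_mul, ← Finset.sum_sub_distrib]
    refine Finset.sum_congr rfl fun b _ => ?_
    have : φ (x a) * (φ (x b) * φ (x b)) - φ (x b) * φ (x b) * φ (x a)
      = (φ (x a) * φ (x b) - φ (x b) * φ (x a)) * φ (x b)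
        + φ (x b) * (φ (x a) * φ (x b) - φ (x b) * φ (x a)) := by noncomm_ring
    rw [this, h1, Finset.sum_mul, Finset.mul_sum, ← Finset.sum_add_distrib]
    refine Finset.sum_congr rfl fun c _ => ?_
    rw [smul_mul_assoc, mul_smul_comm, smul_add]
  have h3 : (∑ b, ∑ c, γ a b c • (φ (x c) * φ (x b) + φ (x b) * φ (x c)))
      = -∑ b, ∑ c, γ a b c • (φ (x c) * φ (x b) + φ (x b) * φ (x c)) := by
    conv_lhs => rw [Finset.sum_comm]
    simp_rw [← Finset.sum_neg_distrib]
    refine Finset.sum_congr rfl fun b _ => Finset.sum_congr rfl fun c _ => ?_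
    rw [hγ a c b, neg_smul, add_comm]
  have h4 : (2 : ℂ) • (∑ b, ∑ c, γ a b c • (φ (x c) * φ (x b) + φ (x b) * φ (x c))) = 0 := by
    rw [two_smul]
    nth_rewrite 1 [h3]
    simp
  rw [smul_eq_zero_iff_right two_ne_zero, ← h2] at h4
  exact sub_eq_zero.mp h4

theorem cas_nilp {ι L V : Type*} [Fintype ι] [LieRing L] [LieAlgebra ℂ L] {x : ι → L}
    (hx : IsSoFam x) [AddCommGroup V] [Module ℂ V] [FiniteDimensional ℂ V]
    (φ : L →ₗ⁅ℂ⁆ End ℂ V) (hn : IsNilpotent (∑ b, φ (x b) * φ (x b))) (a : ι) :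
    φ (x a) = 0 := by
  have h1 : ∀ a, ∃ r : ℝ, 0 ≤ r ∧ LinearMap.trace ℂ V (φ (x a) * φ (x a)) = -(r : ℂ) ∧
      (r = 0 → φ (x a) = 0) := by
    intro a
    rcases hx.tri a with h | ⟨b, c, ε, hε, h1, h2, h3⟩
    · exact ⟨0, le_rfl, by simp [h], fun _ => by simp [h]⟩
    · refine so3_trace _ (φ (x b)) (φ (x c)) ε hε ?_ ?_ ?_
      · rw [← LieHom.map_lie, h1, map_smul]
      · rw [← LieHom.map_lie, h2, map_neg, map_smul]
      · rw [← LieHom.map_lie, h3, map_smul]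
  choose r hr0 hr hrz using h1
  have h2 := (LinearMap.isNilpotent_trace_of_isNilpotent hn).eq_zero
  rw [map_sum] at h2
  simp_rw [hr] at h2
  rw [Finset.sum_neg_distrib, neg_eq_zero] at h2
  have h3 : ∑ i, r i = 0 := by exact_mod_cast h2
  rw [Finset.sum_eq_zero_iff_of_nonneg (fun i _ => hr0 i)] at h3
  exact hrz a (h3 a (Finset.mem_univ a))

/-- The Casimir operator. -/
noncomputable def casOp {ι L : Type*} [Fintype ι] [LieRing L] [LieAlgebra ℂ L] (x : ι → L)
    (V : Type*) [AddCommGroup V] [Module ℂ V] [LieRingModule L V] [LieModule ℂ L V] : End ℂ V :=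
  ∑ b, LieModule.toEnd ℂ L V (x b) * LieModule.toEnd ℂ L V (x b)

theorem casOp_apply {ι L : Type*} [Fintype ι] [LieRing L] [LieAlgebra ℂ L] (x : ι → L)
    (V : Type*) [AddCommGroup V] [Module ℂ V] [LieRingModule L V] [LieModule ℂ L V] (v : V) :
    casOp x V v = ∑ b, ⁅x b, ⁅x b, v⁆⁆ := by
  simp [casOp, LinearMap.sum_apply]

theorem cas_ker {ι L V : Type*} [Fintype ι] [LieRing L] [LieAlgebra ℂ L] {x : ι → L}
    (hx : IsSoFam x) [AddCommGroup V] [Module ℂ V] [FiniteDimensional ℂ V]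
    [LieRingModule L V] [LieModule ℂ L V] (k : ℕ) (v : V) (hv : (casOp x V ^ k) v = 0) (a : ι) :
    ⁅x a, v⁆ = 0 := by
  have hc : ∀ a, Commute (LieModule.toEnd ℂ L V (x a)) (casOp x V) := fun a => cas_comm hx _ a
  -- Lie subalgebra of elements commuting with the Casimir operator
  let L' : LieSubalgebra ℂ L :=
    { carrier := {y | Commute (LieModule.toEnd ℂ L V y) (casOp x V)}
      add_mem' := fun {y z} hy hz => by
        simp only [Set.mem_ofPred_eq, map_add] at *
        exact hy.add_left hz
      zero_mem' := by simp
      smul_mem' := fun c y hy => by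
        simp only [Set.mem_ofPred_eq, map_smul] at *
        exact hy.smul_left c
      lie_mem' := fun {y z} hy hz => by
        simp only [Set.mem_ofPred_eq, LieHom.map_lie, Ring.lie_def] at *
        exact (Commute.mul_left hy hz).sub_left (Commute.mul_left hz hy) }
  let x' : ι → L' := fun a => ⟨x a, hc a⟩
  have hx' : IsSoFam x' := by
    refine ⟨?_, ?_⟩
    · obtain ⟨γ, h1, h2⟩ := hx.cas
      refine ⟨γ, h1, fun a b => Subtype.ext ?_⟩
      simpa [x'] using h2 a b
    · intro a
      rcases hx.tri a with h | ⟨b, c, ε, hε, h1, h2, h3⟩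
      · exact Or.inl (Subtype.ext h)
      · exact Or.inr ⟨b, c, ε, hε, Subtype.ext h1, Subtype.ext h2, Subtype.ext h3⟩
  let W : LieSubmodule ℂ L' V :=
    { LinearMap.ker (casOp x V ^ k) with
      lie_mem := fun {y m} hm => by
        have h1 : Commute (LieModule.toEnd ℂ L V y) (casOp x V ^ k) := Commute.pow_right y.2 k
        have h2 := congrArg (fun T : End ℂ V => T m) h1.eq
        have hm' : (casOp x V ^ k) m = 0 := hm
        simp only [Module.End.mul_apply, hm', map_zero] at h2
        exact h2.symm }
  have key := cas_nilp hx' (LieModule.toEnd ℂ L' W) ⟨k, ?_⟩ a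
  · have := congrArg (fun T : End ℂ W => (T ⟨v, hv⟩ : V)) key
    exact this
  · have hco : ∀ w : W, ((casOp x' W w : W) : V) = casOp x V w := by
      intro w
      rw [casOp_apply, casOp_apply]
      push_cast
      rfl
    have hco2 : ∀ (n : ℕ) (w : W), (((casOp x' W ^ n) w : W) : V) = (casOp x V ^ n) w := by
      intro n
      induction n with
      | zero => intro w; rfl
      | succ n ih => intro w; rw [pow_succ, pow_succ, Module.End.mul_apply, Module.End.mul_apply,
          ih, hco]
    ext w
    exact (hco2 k w).trans w.2

theorem lift_inv {ι L V V' : Type*} [Fintype ι] [LieRing L] [LieAlgebra ℂ L] {x : ι → L}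
    (hx : IsSoFam x) [AddCommGroup V] [Module ℂ V] [FiniteDimensional ℂ V]
    [LieRingModule L V] [LieModule ℂ L V] [AddCommGroup V'] [Module ℂ V'] [FiniteDimensional ℂ V']
    [LieRingModule L V'] [LieModule ℂ L V'] (φ : V →ₗ[ℂ] V')
    (hφ : ∀ a v, φ ⁅x a, v⁆ = ⁅x a, φ v⁆) (hs : Function.Surjective φ) (w : V')
    (hw : ∀ a, ⁅x a, w⁆ = 0) : ∃ v : V, (∀ a, ⁅x a, v⁆ = 0) ∧ φ v = w := by
  obtain ⟨u, rfl⟩ := hs w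
  have hcas : ∀ v, φ (casOp x V v) = casOp x V' (φ v) := by
    intro v
    rw [casOp_apply, casOp_apply, map_sum]
    simp_rw [hφ]
  have hpow : ∀ (n : ℕ) v, φ ((casOp x V ^ n) v) = (casOp x V' ^ n) (φ v) := by
    intro n
    induction n with
    | zero => intro v; rfl
    | succ n ih => intro v; rw [pow_succ, pow_succ, Module.End.mul_apply, Module.End.mul_apply,
          ih, hcas]
  obtain ⟨n, hn⟩ := Filter.eventually_atTop.mp
    (LinearMap.eventually_isCompl_ker_pow_range_pow (casOp x V))
  have hcompl := hn (n + 1) (Nat.le_succ n)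
  obtain ⟨v0, hv0, v1, ⟨t, rfl⟩, hsum⟩ :=
    Submodule.mem_sup.mp (hcompl.sup_eq_top ▸ Submodule.mem_top : u ∈ _)
  have hv0' := cas_ker hx (n + 1) v0 hv0
  refine ⟨v0, hv0', ?_⟩
  have hker0 : ∀ y : V', (∀ a, ⁅x a, y⁆ = 0) → casOp x V' y = 0 := by
    intro y hy
    rw [casOp_apply]
    simp [hy]
  have h1 : casOp x V' ((casOp x V' ^ (n + 1)) (φ t)) = 0 := by
    apply hker0
    intro a
    rw [← hpow, ← add_sub_cancel_left v0 ((casOp x V ^ (n + 1)) t), hsum, map_sub, lie_sub, hw,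
      ← hφ, hv0']
    simp
  have h2 : (casOp x V' ^ (n + 2)) (φ t) = 0 := by
    rw [pow_succ', Module.End.mul_apply, h1]
  have h3 := hker0 _ (cas_ker hx (n + 2) _ h2)
  rw [← hsum, map_add, hpow, pow_succ, Module.End.mul_apply, h3]
  simp

theorem so_compl {ι M : Type*} [Fintype ι] [AddCommGroup M] [Module ℂ M] [FiniteDimensional ℂ M]
    {X : ι → End ℂ M} (hX : IsSoFam X) (N : Submodule ℂ M) (hN : ∀ a, ∀ m ∈ N, X a m ∈ N) :
    ∃ S : Submodule ℂ M, (∀ a, ∀ m ∈ S, X a m ∈ S) ∧ IsCompl N S := by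
  let L : LieSubalgebra ℂ (End ℂ M) :=
    { carrier := {T | ∀ m ∈ N, T m ∈ N}
      add_mem' := fun {y z} hy hz m hm => N.add_mem (hy m hm) (hz m hm)
      zero_mem' := fun m hm => N.zero_mem
      smul_mem' := fun c y hy m hm => N.smul_mem c (hy m hm)
      lie_mem' := fun {y z} hy hz m hm =>
        N.sub_mem (hy _ (hz m hm)) (hz _ (hy m hm)) }
  let x : ι → L := fun a => ⟨X a, hN a⟩
  have hx : IsSoFam x := by
    refine ⟨?_, ?_⟩
    · obtain ⟨γ, h1, h2⟩ := hX.cas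
      refine ⟨γ, h1, fun a b => Subtype.ext ?_⟩
      simpa [x] using h2 a b
    · intro a
      rcases hX.tri a with h | ⟨b, c, ε, hε, h1, h2, h3⟩
      · exact Or.inl (Subtype.ext h)
      · exact Or.inr ⟨b, c, ε, hε, Subtype.ext h1, Subtype.ext h2, Subtype.ext h3⟩
  let N' : LieSubmodule ℂ L M :=
    { N with lie_mem := fun {y m} hm => y.2 m hm }
  have : FiniteDimensional ℂ N' := inferInstanceAs (FiniteDimensional ℂ N)
  let φ : (M →ₗ[ℂ] N') →ₗ[ℂ] (N' →ₗ[ℂ] N') := LinearMap.lcomp ℂ N' (N' : Submodule ℂ M).subtype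
  obtain ⟨π, hπ, hπ1⟩ := lift_inv hx φ (fun a v => by ext m; rfl) (fun g => by
      obtain ⟨q, hq⟩ := Submodule.exists_isCompl (N' : Submodule ℂ M)
      refine ⟨g ∘ₗ (N' : Submodule ℂ M).projectionOnto q hq, ?_⟩
      refine LinearMap.ext fun m => congrArg g ?_
      exact Submodule.projectionOnto_apply_left hq m) (LinearMap.id) (fun a => by ext m; simp)
  refine ⟨LinearMap.ker π, ?_, ?_⟩
  · intro a m hm
    have h1 := congrArg (fun T : M →ₗ[ℂ] N' => T m) (hπ a)
    simp only [LieHom.lie_apply, LinearMap.zero_apply] at h1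
    rw [LinearMap.mem_ker] at hm ⊢
    rw [hm, lie_zero, zero_sub, neg_eq_zero] at h1
    exact h1
  · have : ∀ n : N', π n = n := fun n => congrArg (fun T : N' →ₗ[ℂ] N' => T n) hπ1
    exact LinearMap.isCompl_of_proj (p := N) this


/-- standard basis vector -/
noncomputable def eb (n : ℕ) (j : Fin n) : Fin n → ℂ := Pi.single j 1

/-- determinant of a family of basis vectors -/
noncomputable def sg (n : ℕ) (u : Fin n → Fin n) : ℂ :=
  Matrix.detRowAlternating (R := ℂ) (fun r => eb n (u r))

theorem sg_not_inj {n : ℕ} {u : Fin n → Fin n} (h : ¬ Function.Injective u) : sg n u = 0 := by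
  refine AlternatingMap.map_eq_zero_of_not_injective _ _ fun hi => h ?_
  intro a b hab
  exact hi (by simp only [hab])

theorem sg_swap {n : ℕ} (u : Fin n → Fin n) {i j : Fin n} (hij : i ≠ j) :
    sg n (u ∘ Equiv.swap i j) = -sg n u :=
  AlternatingMap.map_swap (Matrix.detRowAlternating (R := ℂ)) (fun r => eb n (u r)) hij

theorem eb_det (n : ℕ) : Matrix.detRowAlternating (R := ℂ) (eb n) = 1 := by
  have : Matrix.of (eb n) = (1 : Matrix (Fin n) (Fin n) ℂ) := by
    ext i j
    simp [eb, Matrix.one_apply, Pi.single_apply, eq_comm]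
  exact (congrArg Matrix.det this).trans Matrix.det_one

theorem sg_sq {n : ℕ} {u : Fin n → Fin n} (h : Function.Surjective u) : sg n u ^ 2 = 1 := by
  have hb : Function.Bijective u := ⟨Finite.injective_iff_surjective.mpr h, h⟩
  have h1 := AlternatingMap.map_perm (Matrix.detRowAlternating (R := ℂ)) (eb n)
    (Equiv.ofBijective u hb)
  have h3 : sg n u = Matrix.detRowAlternating (R := ℂ) (eb n ∘ (Equiv.ofBijective u hb)) := rfl
  rw [h3, h1, eb_det]
  rcases Int.units_eq_one_or (Equiv.Perm.sign (Equiv.ofBijective u hb)) with h | h <;> simp [h]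

theorem omega_sg {p : ℕ} (ω : (Fin (p + 3) → ℂ) [⋀^Fin (p + 2)]→ₗ[ℂ] (Fin (p + 3) → ℂ))
    (hbasis : ∀ i : Fin (p + 3),
      ω (fun r => eb (p + 3) (i.succAbove r)) = ((-1 : ℂ) ^ ((i : ℕ) + 1)) • eb (p + 3) i)
    (v : Fin (p + 2) → Fin (p + 3)) (k : Fin (p + 3)) :
    ω (fun r => eb (p + 3) (v r)) k = -sg (p + 3) (Fin.cons k v) := by
  by_cases hv : Function.Injective v
  swap
  · rw [AlternatingMap.map_eq_zero_of_not_injective, sg_not_inj]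
    · simp
    · intro h
      refine hv fun a b hab => ?_
      have := @h a.succ b.succ (by simpa using hab)
      simpa using this
    · intro hi
      exact hv fun a b hab => hi (by simp only [hab])
  obtain ⟨i, hi⟩ : ∃ i, ∀ r, v r ≠ i := by
    by_contra! hc
    have := Fintype.card_le_of_surjective v hc
    simp at this
  choose σ hσ using fun r => Fin.exists_succAbove_eq (hi r)
  have hσi : Function.Injective σ := fun a b hab => hv (by rw [← hσ a, ← hσ b, hab])
  let τ := Equiv.ofBijective σ ⟨hσi, Finite.injective_iff_surjective.mp hσi⟩
  let g : (Fin (p + 3) → ℂ) [⋀^Fin (p + 2)]→ₗ[ℂ] ℂ :=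
    (Matrix.detRowAlternating (R := ℂ) (n := Fin (p + 3))).curryLeft (eb (p + 3) k)
  have hg : ∀ v : Fin (p + 2) → Fin (p + 3),
      sg (p + 3) (Fin.cons k v) = g (fun r => eb (p + 3) (v r)) := by
    intro v
    simp only [sg, g, AlternatingMap.curryLeft_apply_apply]
    congr 1
    ext r
    refine Fin.cases ?_ (fun r => ?_) r <;> simp
  have e1 : (fun r => eb (p + 3) (v r)) = (fun r => eb (p + 3) (i.succAbove r)) ∘ τ := by
    funext r
    exact congrArg _ (hσ r).symm
  rw [hg, e1, AlternatingMap.map_perm, AlternatingMap.map_perm, hbasis]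
  have e2 : g (fun r => eb (p + 3) (i.succAbove r)) = (-1) ^ (i : ℕ) * eb (p + 3) i k := by
    by_cases hik : k = i
    · subst hik
      simp only [g, AlternatingMap.curryLeft_apply_apply]
      have : (Matrix.vecCons (eb (p + 3) k) (fun r => eb (p + 3) (k.succAbove r)))
        = (eb (p + 3)) ∘ k.cycleRange.symm := by
        funext r
        refine Fin.cases ?_ (fun r => ?_) r <;> simp
      rw [this, AlternatingMap.map_perm]
      rw [eb_det, Equiv.Perm.sign_symm, Fin.sign_cycleRange]
      simp [eb, Units.smul_def]
    · rw [← hg, sg_not_inj]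
      · simp [eb, hik]
      · intro h
        obtain ⟨y, hy⟩ := Fin.exists_succAbove_eq hik
        have := @h 0 y.succ (by simpa using hy.symm)
        exact absurd this (Fin.succ_ne_zero y).symm
  rw [e2, pow_succ]
  rcases Int.units_eq_one_or (Equiv.Perm.sign τ) with h | h <;> simp [h]

theorem eb_snoc {p : ℕ} (a : Fin (p + 1) → Fin (p + 3)) (j : Fin (p + 3)) :
    (Fin.snoc (fun r => eb (p + 3) (a r)) (eb (p + 3) j) : Fin (p + 2) → (Fin (p + 3) → ℂ)) =
      fun r => eb (p + 3) ((Fin.snoc a j : Fin (p + 2) → Fin (p + 3)) r) := by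
  funext r
  refine Fin.lastCases ?_ (fun r => ?_) r <;> simp

theorem eb_update {p n : ℕ} (a : Fin p → Fin n) (i : Fin p) (j : Fin n) :
    Function.update (fun r => eb n (a r)) i (eb n j) = fun r => eb n (Function.update a i j r) := by
  funext r
  by_cases h : r = i
  · subst h; simp
  · simp [h]

theorem sg_skew {p : ℕ} (a : Fin (p + 1) → Fin (p + 3)) (j k : Fin (p + 3)) :
    sg (p + 3) (Fin.cons k (Fin.snoc a j : Fin (p + 2) → Fin (p + 3))) =
      -sg (p + 3) (Fin.cons j (Fin.snoc a k : Fin (p + 2) → Fin (p + 3))) := by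
  rw [← sg_swap _ (i := 0) (j := Fin.last (p + 2)) (Fin.last_pos.ne)]
  congr 1
  funext r
  refine Fin.cases ?_ (fun r => ?_) r
  · rw [Function.comp_apply, Equiv.swap_apply_left, ← Fin.succ_last, Fin.cons_zero, Fin.cons_succ,
      Fin.snoc_last]
  · refine Fin.lastCases ?_ (fun r => ?_) r
    · rw [Function.comp_apply, Fin.succ_last, Equiv.swap_apply_right, ← Fin.succ_last,
        Fin.cons_zero, Fin.cons_succ, Fin.snoc_last]
    · rw [Function.comp_apply, Equiv.swap_apply_of_ne_of_ne (Fin.succ_ne_zero _)]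
      · simp
      · rw [← Fin.succ_last]
        intro h
        exact absurd (Fin.succ_injective _ h) (Fin.castSucc_lt_last r).ne

theorem sg_skew' {p : ℕ} (a : Fin (p + 1) → Fin (p + 3)) (j k : Fin (p + 3)) :
    sg (p + 3) (Fin.cons (a 0) (Fin.snoc (Function.update a 0 j) k : Fin (p + 2) → Fin (p + 3))) =
      -sg (p + 3) (Fin.cons j (Fin.snoc a k : Fin (p + 2) → Fin (p + 3))) := by
  have h01 : (0 : Fin (p + 3)) ≠ 1 := by simp
  rw [← sg_swap _ h01]
  congr 1
  have h1 : (1 : Fin (p + 3)) = Fin.succ (Fin.castSucc (0 : Fin (p + 1))) := rfl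
  funext r
  refine Fin.cases ?_ (fun r => ?_) r
  · rw [Function.comp_apply, Equiv.swap_apply_left, h1, Fin.cons_succ, Fin.snoc_castSucc,
      Fin.cons_zero]
  · refine Fin.lastCases ?_ (fun r => ?_) r
    · rw [Function.comp_apply, Equiv.swap_apply_of_ne_of_ne (Fin.succ_ne_zero _)]
      · simp
      · rw [h1]
        intro h
        exact absurd (Fin.succ_injective _ h) (Fin.castSucc_lt_last 0).ne'
    · by_cases hr : r = 0
      · subst hr
        rw [Function.comp_apply, ← h1, Equiv.swap_apply_right, h1, Fin.cons_succ,
          Fin.snoc_castSucc, Fin.cons_zero, Function.update_self]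
      · rw [Function.comp_apply, Equiv.swap_apply_of_ne_of_ne (Fin.succ_ne_zero _)]
        · simp [hr]
        · rw [h1]
          intro h
          exact hr (Fin.castSucc_injective _ (Fin.succ_injective _ h))

section Concrete

variable {M : Type*} [AddCommGroup M] [Module ℂ M] {p : ℕ}
  (ω : (Fin (p + 3) → ℂ) [⋀^Fin (p + 2)]→ₗ[ℂ] (Fin (p + 3) → ℂ))
  (hbasis : ∀ i : Fin (p + 3),
      ω (fun r => eb (p + 3) (i.succAbove r)) = ((-1 : ℂ) ^ ((i : ℕ) + 1)) • eb (p + 3) i)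
  (ρ : (Fin (p + 3) → ℂ) [⋀^Fin (p + 1)]→ₗ[ℂ] Module.End ℂ M)

theorem omega_T (hbasis : ∀ i : Fin (p + 3),
      ω (fun r => eb (p + 3) (i.succAbove r)) = ((-1 : ℂ) ^ ((i : ℕ) + 1)) • eb (p + 3) i)
    (a : Fin (p + 1) → Fin (p + 3)) (j k : Fin (p + 3))
    (hc : ∀ z, (∃ r, a r = z) ∨ z = j ∨ z = k) :
    ω (fun r => eb (p + 3) ((Fin.snoc a j : Fin (p + 2) → Fin (p + 3)) r)) =
      (-sg (p + 3) (Fin.cons k (Fin.snoc a j : Fin (p + 2) → Fin (p + 3)))) • eb (p + 3) k := by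
  funext z
  rw [omega_sg ω hbasis]
  by_cases hz : z = k
  · subst hz; simp [eb]
  · rw [sg_not_inj]
    · simp [eb, hz]
    · intro h
      rcases hc z with ⟨r, rfl⟩ | rfl | rfl
      · have := @h 0 r.castSucc.succ (by
          rw [Fin.cons_succ, Fin.snoc_castSucc, Fin.cons_zero])
        exact absurd this (Fin.succ_ne_zero _).symm
      · have := @h 0 (Fin.last _).succ (by rw [Fin.cons_succ, Fin.snoc_last, Fin.cons_zero])
        exact absurd this (Fin.succ_ne_zero _).symm
      · exact hz rfl

theorem bracket_update
    (hrep : ∀ a b : Fin (p + 1) → (Fin (p + 3) → ℂ),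
      ρ a * ρ b - ρ b * ρ a =
        ∑ i : Fin (p + 1), ((-1 : ℂ) ^ (i : ℕ)) •
          ρ (Fin.cons (ω (Fin.snoc a (b i))) (fun r => b (i.succAbove r))))
    (a b : Fin (p + 1) → Fin (p + 3)) :
    ρ (fun r => eb (p + 3) (a r)) * ρ (fun r => eb (p + 3) (b r)) -
      ρ (fun r => eb (p + 3) (b r)) * ρ (fun r => eb (p + 3) (a r)) =
    ∑ i : Fin (p + 1), ρ (Function.update (fun r => eb (p + 3) (b r)) i
      (ω (fun r => eb (p + 3) ((Fin.snoc a (b i) : Fin (p + 2) → Fin (p + 3)) r)))) := by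
  rw [hrep]
  refine Finset.sum_congr rfl fun i _ => ?_
  rw [eb_snoc]
  generalize ω (fun r => eb (p + 3) ((Fin.snoc a (b i) : Fin (p + 2) → Fin (p + 3)) r)) = w
  have h1 : Function.update (fun r => eb (p + 3) (b r)) i w =
      (i.insertNth w (fun r => eb (p + 3) (b (i.succAbove r))) :
        Fin (p + 1) → (Fin (p + 3) → ℂ)) := by
    rw [eq_comm, Fin.insertNth_eq_iff]
    refine ⟨by simp, ?_⟩
    funext r
    simp [Fin.removeNth]
  rw [h1, AlternatingMap.map_insertNth]
  have h2 : ∀ (k : ℕ) (T : End ℂ M), ((-1 : ℂ) ^ k) • T = ((-1 : ℤ) ^ k) • T := by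
    intro k T
    rcases neg_one_pow_eq_or ℤ k with h | h
    · have : (-1 : ℂ) ^ k = 1 := by exact_mod_cast congrArg (Int.cast : ℤ → ℂ) h
      rw [h, this]; simp
    · have : (-1 : ℂ) ^ k = -1 := by exact_mod_cast congrArg (Int.cast : ℤ → ℂ) h
      rw [h, this]; simp
  rw [h2]
  rfl

theorem rho_update_expand (b : Fin (p + 1) → Fin (p + 3)) (i : Fin (p + 1))
    (w : Fin (p + 3) → ℂ) :
    ρ (Function.update (fun r => eb (p + 3) (b r)) i w) =
      ∑ k, w k • ρ (fun r => eb (p + 3) (Function.update b i k r)) := by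
  have hw : w = ∑ k, w k • eb (p + 3) k := by
    funext z
    simp [eb, Finset.sum_apply, Pi.single_apply]
  conv_lhs => rw [hw]
  rw [AlternatingMap.map_update_sum]
  refine Finset.sum_congr rfl fun k _ => ?_
  rw [AlternatingMap.map_update_smul, eb_update]

theorem bracket_zero
    (hrep : ∀ a b : Fin (p + 1) → (Fin (p + 3) → ℂ),
      ρ a * ρ b - ρ b * ρ a =
        ∑ i : Fin (p + 1), ((-1 : ℂ) ^ (i : ℕ)) •
          ρ (Fin.cons (ω (Fin.snoc a (b i))) (fun r => b (i.succAbove r))))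
    (a b : Fin (p + 1) → Fin (p + 3)) (hab : ∀ r, r ≠ 0 → b r = a r) (ε : ℂ) (k : Fin (p + 3))
    (hk : ω (fun r => eb (p + 3) ((Fin.snoc a (b 0) : Fin (p + 2) → Fin (p + 3)) r)) =
      ε • eb (p + 3) k) :
    ρ (fun r => eb (p + 3) (a r)) * ρ (fun r => eb (p + 3) (b r)) -
      ρ (fun r => eb (p + 3) (b r)) * ρ (fun r => eb (p + 3) (a r)) =
    ε • ρ (fun r => eb (p + 3) (Function.update b 0 k r)) := by
  rw [bracket_update ω ρ hrep, Finset.sum_eq_single 0]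
  · rw [hk, AlternatingMap.map_update_smul, eb_update]
  · intro i _ hi
    have : ω (fun r => eb (p + 3) ((Fin.snoc a (b i) : Fin (p + 2) → Fin (p + 3)) r)) = 0 := by
      refine AlternatingMap.map_eq_zero_of_eq ω _ (i := i.castSucc) (j := Fin.last _) ?_
        (Fin.castSucc_lt_last i).ne
      rw [Fin.snoc_castSucc, Fin.snoc_last, hab i hi]
    rw [this]
    exact AlternatingMap.map_update_zero _ _ _
  · simp

theorem soFam (hbasis : ∀ i : Fin (p + 3),
      ω (fun r => eb (p + 3) (i.succAbove r)) = ((-1 : ℂ) ^ ((i : ℕ) + 1)) • eb (p + 3) i)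
    (hrep : ∀ a b : Fin (p + 1) → (Fin (p + 3) → ℂ),
      ρ a * ρ b - ρ b * ρ a =
        ∑ i : Fin (p + 1), ((-1 : ℂ) ^ (i : ℕ)) •
          ρ (Fin.cons (ω (Fin.snoc a (b i))) (fun r => b (i.succAbove r)))) :
    IsSoFam (fun a : Fin (p + 1) → Fin (p + 3) => ρ (fun r => eb (p + 3) (a r))) := by
  classical
  refine ⟨⟨fun a b c => ∑ i, if ∀ r, r ≠ i → c r = b r then
      ω (fun r => eb (p + 3) ((Fin.snoc a (b i) : Fin (p + 2) → Fin (p + 3)) r)) (c i) else 0,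
      ?_, ?_⟩, ?_⟩
  · intro a b c
    simp only
    rw [← Finset.sum_neg_distrib]
    refine Finset.sum_congr rfl fun i _ => ?_
    have : (∀ r, r ≠ i → c r = b r) ↔ (∀ r, r ≠ i → b r = c r) :=
      ⟨fun h r hr => (h r hr).symm, fun h r hr => (h r hr).symm⟩
    by_cases h : ∀ r, r ≠ i → c r = b r
    · rw [if_pos h, if_pos (this.mp h), omega_sg ω hbasis, omega_sg ω hbasis, sg_skew]
    · rw [if_neg h, if_neg (fun h' => h (this.mpr h')), neg_zero]
  · intro a b
    rw [Ring.lie_def, bracket_update ω ρ hrep]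
    simp_rw [Finset.sum_smul]
    rw [Finset.sum_comm]
    refine Finset.sum_congr rfl fun i _ => ?_
    rw [rho_update_expand]
    simp_rw [ite_smul, zero_smul]
    rw [← Finset.sum_filter]
    refine Finset.sum_bij (fun k _ => Function.update b i k) ?_ ?_ ?_ ?_
    · intro k _
      simp only [Finset.mem_filter, Finset.mem_univ, true_and]
      intro r hr
      simp [hr]
    · intro k _ k' _ h
      simpa using congrFun h i
    · intro c hc
      simp only [Finset.mem_filter, Finset.mem_univ, true_and] at hc
      refine ⟨c i, Finset.mem_univ _, ?_⟩
      funext r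
      by_cases h : r = i
      · subst h; simp
      · simp [h, hc r h]
    · intro k _
      simp
  · intro a
    by_cases ha : Function.Injective a
    swap
    · left
      refine AlternatingMap.map_eq_zero_of_not_injective _ _ fun hi => ha ?_
      intro x y hxy
      exact hi (by simp only [hxy])
    right
    have hcard : ((Finset.univ.image a)ᶜ).card = 2 := by
      rw [Finset.card_compl, Finset.card_image_of_injective _ ha]
      simp
    obtain ⟨j, k, hjk, hjk'⟩ := Finset.card_eq_two.mp hcard
    have hc : ∀ z, (∃ r, a r = z) ∨ z = j ∨ z = k := by
      intro z
      by_cases hz : z ∈ (Finset.univ.image a)ᶜ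
      · right
        rw [hjk'] at hz
        simpa using hz
      · left
        simpa using hz
    let ε := -sg (p + 3) (Fin.cons k (Fin.snoc a j : Fin (p + 2) → Fin (p + 3)))
    have hε : ε ^ 2 = 1 := by
      rw [neg_sq]
      apply sg_sq
      intro z
      rcases hc z with ⟨r, rfl⟩ | rfl | rfl
      · exact ⟨r.castSucc.succ, by rw [Fin.cons_succ, Fin.snoc_castSucc]⟩
      · exact ⟨(Fin.last _).succ, by rw [Fin.cons_succ, Fin.snoc_last]⟩
      · exact ⟨0, by rw [Fin.cons_zero]⟩
    refine ⟨Function.update a 0 j, Function.update a 0 k, ε, hε, ?_, ?_, ?_⟩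
    · rw [Ring.lie_def, bracket_zero ω ρ hrep a (Function.update a 0 j) (fun r hr => by simp [hr])
        ε k ?_]
      · simp
      · rw [Function.update_self]
        exact omega_T ω hbasis a j k hc
    · rw [Ring.lie_def, bracket_zero ω ρ hrep a (Function.update a 0 k) (fun r hr => by simp [hr])
        (-ε) j ?_]
      · simp
      · rw [Function.update_self, omega_T ω hbasis a k j (fun z => (hc z).imp_right Or.symm),
          sg_skew]
    · rw [Ring.lie_def, bracket_zero ω ρ hrep (Function.update a 0 j) (Function.update a 0 k)
        (fun r hr => by simp [hr]) ε (a 0) ?_]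
      · simp
      · rw [Function.update_self, omega_T ω hbasis (Function.update a 0 j) k (a 0) ?_, sg_skew',
          ← sg_skew]
        intro z
        rcases hc z with ⟨r, rfl⟩ | rfl | rfl
        · by_cases hr : r = 0
          · subst hr; simp
          · exact Or.inl ⟨r, by simp [hr]⟩
        · exact Or.inl ⟨0, by simp⟩
        · simp

theorem rho_mem (P : Submodule ℂ (End ℂ M))
    (hP : ∀ a : Fin (p + 1) → Fin (p + 3), ρ (fun r => eb (p + 3) (a r)) ∈ P)
    (u : Fin (p + 1) → (Fin (p + 3) → ℂ)) : ρ u ∈ P := by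
  have hu : u = fun r => ∑ k, u r k • eb (p + 3) k := by
    funext r z
    simp [eb, Finset.sum_apply, Pi.single_apply]
  rw [hu]
  have := ρ.toMultilinearMap.map_sum (fun r k => u r k • eb (p + 3) k)
  refine (congrArg (· ∈ P) this).mpr (P.sum_mem fun a _ => ?_)
  rw [MultilinearMap.map_smul_univ]
  exact P.smul_mem _ (hP a)

end Concrete

end Helpers

/-- Every finite-dimensional `n`-Lie module over the vector products
`n`-Lie algebra `V_n` over `ℂ` (`n = p + 2 ≥ 2`, `V_n = Fin (p+3) → ℂ` with the cross
product bracket `ω` determined by `[e_0,…,ê_i,…,e_{n+1}] = (-1)^{i+1} • e_i`) is completely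
reducible.  An `n`-Lie module is a module over the basic Lie algebra `L(V_n)` — the
representation `ρ` on decomposable wedges respects the Lie bracket of `L(V_n)` (`hrep`) —
on which the quadratic relations hold (`hmod`); complete reducibility is phrased as: every
invariant subspace has an invariant complement. -/
theorem stmt_15 {M : Type*} [AddCommGroup M] [Module ℂ M] [FiniteDimensional ℂ M]
    (p : ℕ)
    (ω : (Fin (p + 3) → ℂ) [⋀^Fin (p + 2)]→ₗ[ℂ] (Fin (p + 3) → ℂ))
    (hbasis : ∀ i : Fin (p + 3),
      ω (fun r => (Pi.single (i.succAbove r) (1 : ℂ) : Fin (p + 3) → ℂ)) =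
        ((-1 : ℂ) ^ ((i : ℕ) + 1)) • (Pi.single i (1 : ℂ) : Fin (p + 3) → ℂ))
    (ρ : (Fin (p + 3) → ℂ) [⋀^Fin (p + 1)]→ₗ[ℂ] Module.End ℂ M)
    (hrep : ∀ a b : Fin (p + 1) → (Fin (p + 3) → ℂ),
      ⁅ρ a, ρ b⁆ =
        ∑ i : Fin (p + 1), ((-1 : ℂ) ^ (i : ℕ)) •
          ρ (Fin.cons (ω (Fin.snoc a (b i))) (fun r => b (i.succAbove r))))
    (hmod : ∀ (a : Fin (p + 2) → (Fin (p + 3) → ℂ)) (c : Fin p → (Fin (p + 3) → ℂ)),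
      ρ (Fin.cons (ω a) c) =
        ∑ i : Fin (p + 2), ((-1 : ℂ) ^ ((i : ℕ) + p + 1)) •
          (ρ (fun r => a (i.succAbove r)) * ρ (Fin.cons (a i) c))) :
    ∀ N : Submodule ℂ M,
      (∀ u : Fin (p + 1) → (Fin (p + 3) → ℂ), ∀ x ∈ N, ρ u x ∈ N) →
      ∃ S : Submodule ℂ M,
        (∀ u : Fin (p + 1) → (Fin (p + 3) → ℂ), ∀ x ∈ S, ρ u x ∈ S) ∧ IsCompl N S := by
  intro N hN
  have hbasis' : ∀ i : Fin (p + 3),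
      ω (fun r => eb (p + 3) (i.succAbove r)) = ((-1 : ℂ) ^ ((i : ℕ) + 1)) • eb (p + 3) i := hbasis
  have hrep' : ∀ a b : Fin (p + 1) → (Fin (p + 3) → ℂ),
      ρ a * ρ b - ρ b * ρ a =
        ∑ i : Fin (p + 1), ((-1 : ℂ) ^ (i : ℕ)) •
          ρ (Fin.cons (ω (Fin.snoc a (b i))) (fun r => b (i.succAbove r))) := by
    intro a b
    rw [← hrep, Ring.lie_def]
  obtain ⟨S, hS, hNS⟩ := so_compl (soFam ω ρ hbasis' hrep') N (fun a m hm => hN _ m hm)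
  refine ⟨S, ?_, hNS⟩
  intro u
  let P : Submodule ℂ (Module.End ℂ M) :=
    { carrier := {T | ∀ m ∈ S, T m ∈ S}
      add_mem' := fun {y z} hy hz m hm => S.add_mem (hy m hm) (hz m hm)
      zero_mem' := fun m hm => S.zero_mem
      smul_mem' := fun c y hy m hm => S.smul_mem c (hy m hm) }
  exact rho_mem ρ P hS u
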